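/- arXiv:2109.00623 — 2 statements merged into one kernel-verified Lean document; each statement's English description precedes it below -/
import Mathlib

section
/- Let β > 0, let t* ∈ (0, 2β), let a ∈ ℂ with a ≠ 0, and set w = exp(−π i t*/β). Define m_k = a·w^k for k = 0,1,2, and Γ_0 = m_0 − m_1, Γ_1 = m_1 − m_2. Then Γ_1 ≠ 0 and Γ_0 ≠ Γ_1, and the Prony formulas recover the burst exactly: Γ_0²/(Γ_0 − Γ_1) = a and Γ_0/Γ_1 = exp(π i t*/β); moreover, if t* ∈ (0, β], then (β/π)·arg(Γ_0/Γ_1) = t*, where arg takes values in (−π, π]. -/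
theorem stmt_6
    (β tstar : ℝ) (hβ : 0 < β) (ht0 : 0 < tstar) (ht2 : tstar < 2 * β)
    (a : ℂ) (ha : a ≠ 0)
    (w : ℂ) (hw : w = Complex.exp (-(Real.pi * tstar / β) * Complex.I))
    (m : ℕ → ℂ) (hm : ∀ k, m k = a * w ^ k)
    (Γ₀ Γ₁ : ℂ) (hΓ₀ : Γ₀ = m 0 - m 1) (hΓ₁ : Γ₁ = m 1 - m 2) :
    Γ₁ ≠ 0 ∧ Γ₀ ≠ Γ₁ ∧
    Γ₀ ^ 2 / (Γ₀ - Γ₁) = a ∧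
    Γ₀ / Γ₁ = Complex.exp ((Real.pi * tstar / β) * Complex.I) ∧
    (tstar ≤ β → β / Real.pi * Complex.arg (Γ₀ / Γ₁) = tstar) := by
  have hpi := Real.pi_pos
  have hw0 : w ≠ 0 := by rw [hw]; exact Complex.exp_ne_zero _
  have hinv : Complex.exp ((Real.pi * tstar / β) * Complex.I) = w⁻¹ := by
    rw [hw, ← Complex.exp_neg]
    congr 1
    ring
  have hw1 : w ≠ 1 := by
    intro h
    rw [hw, Complex.exp_eq_one_iff] at h
    obtain ⟨n, hn⟩ := h
    have h2 : ((-(Real.pi * tstar / β) : ℝ) : ℂ) = ((n * (2 * Real.pi) : ℝ) : ℂ) := by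
      push_cast
      apply mul_right_cancel₀ Complex.I_ne_zero
      rw [hn]
      ring
    have h3 := Complex.ofReal_injective h2
    have h4 : tstar = (-n : ℝ) * (2 * β) := by
      field_simp at h3
      linarith
    have h5 : (0 : ℝ) < -n := by
      by_contra hc
      push Not at hc
      nlinarith
    have h6 : (-n : ℝ) < 1 := by
      by_contra hc
      push Not at hc
      nlinarith
    have h7 : 0 < -n := by exact_mod_cast h5
    have h8 : -n < 1 := by exact_mod_cast h6
    omega
  have hs : 1 - w ≠ 0 := sub_ne_zero.mpr (Ne.symm hw1)
  have e0 : Γ₀ = a * (1 - w) := by rw [hΓ₀, hm, hm]; ring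
  have e1 : Γ₁ = a * w * (1 - w) := by rw [hΓ₁, hm, hm]; ring
  have ed : Γ₀ - Γ₁ = a * (1 - w) ^ 2 := by rw [e0, e1]; ring
  have hq : Γ₀ / Γ₁ = Complex.exp ((Real.pi * tstar / β) * Complex.I) := by
    rw [hinv, e0, e1]
    field_simp
  refine ⟨?_, ?_, ?_, hq, ?_⟩
  · rw [e1]
    exact mul_ne_zero (mul_ne_zero ha hw0) hs
  · rw [← sub_ne_zero, ed]
    exact mul_ne_zero ha (pow_ne_zero 2 hs)
  · rw [ed, e0]
    field_simp
  · intro hle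
    have hc : ((Real.pi * tstar / β : ℂ)) = ((Real.pi * tstar / β : ℝ) : ℂ) := by push_cast; rfl
    have hp : 0 < Real.pi * tstar / β := by positivity
    have hl : Real.pi * tstar / β ≤ Real.pi := by
      rw [div_le_iff₀ hβ]
      exact mul_le_mul_of_nonneg_left hle hpi.le
    rw [hq, hc, Complex.arg_exp_mul_I, (toIocMod_eq_self _).mpr]
    · field_simp
    · constructor <;> linarith
end

section
/- Let f_1 = 1_{[0,1]} − (1/2)·1_{[2,3]}, f̃_1 = 1_{[2,3]}, and g = 1_{[1,2]} + 2·1_{[3,4]} as real functions on ℝ, where 1_S denotes the indicator function of the set S. Then for every t ≥ 0, ∫_ℝ f_1(x − t)·g(x) dx = ∫_ℝ (if t ≥ 2 then f̃_1(x − (t − 2)) else 0)·g(x) dx, and both integrals equal the piecewise function that is 0 for t ≤ 2, equals 2t − 4 for 2 ≤ t ≤ 3, equals 8 − 2t for 3 ≤ t ≤ 4, and is 0 for t ≥ 4. -/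
open MeasureTheory

lemma aux_eq (a b c d s : ℝ) :
    (fun x : ℝ => Set.indicator (Set.Icc a b) (fun _ => (1:ℝ)) (x - s)
      * Set.indicator (Set.Icc c d) (fun _ => (1:ℝ)) x)
    = Set.indicator (Set.Icc (max (a + s) c) (min (b + s) d)) (fun _ => (1:ℝ)) := by
  funext x
  simp only [Set.indicator_apply, Set.mem_Icc, max_le_iff, le_min_iff]
  split_ifs <;> grind

lemma aux_int (a b c d s : ℝ) :
    Integrable (fun x : ℝ => Set.indicator (Set.Icc a b) (fun _ => (1:ℝ)) (x - s)
      * Set.indicator (Set.Icc c d) (fun _ => (1:ℝ)) x) := by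
  rw [aux_eq, integrable_indicator_iff measurableSet_Icc]
  exact integrableOn_const (by simp)

lemma aux_val (a b c d s : ℝ) :
    ∫ x : ℝ, Set.indicator (Set.Icc a b) (fun _ => (1:ℝ)) (x - s)
      * Set.indicator (Set.Icc c d) (fun _ => (1:ℝ)) x
    = max (min (b + s) d - max (a + s) c) 0 := by
  rw [aux_eq, integral_indicator measurableSet_Icc]
  simp [Measure.real, ENNReal.toReal_ofReal']

theorem stmt_19
    (f₁ f₁' g : ℝ → ℝ)
    (hf₁ : f₁ = fun x => Set.indicator (Set.Icc (0:ℝ) 1) (fun _ => (1:ℝ)) x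
      - (1 / 2) * Set.indicator (Set.Icc (2:ℝ) 3) (fun _ => (1:ℝ)) x)
    (hf₁' : f₁' = fun x => Set.indicator (Set.Icc (2:ℝ) 3) (fun _ => (1:ℝ)) x)
    (hg : g = fun x => Set.indicator (Set.Icc (1:ℝ) 2) (fun _ => (1:ℝ)) x
      + 2 * Set.indicator (Set.Icc (3:ℝ) 4) (fun _ => (1:ℝ)) x) :
    ∀ t : ℝ, 0 ≤ t →
      (∫ x : ℝ, f₁ (x - t) * g x)
        = (∫ x : ℝ, (if 2 ≤ t then f₁' (x - (t - 2)) else 0) * g x) ∧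
      (∫ x : ℝ, f₁ (x - t) * g x)
        = (if t ≤ 2 then 0 else if t ≤ 3 then 2 * t - 4
            else if t ≤ 4 then 8 - 2 * t else 0) := by
  intro t ht
  have h1 : (∫ x : ℝ, f₁ (x - t) * g x)
      = (if t ≤ 2 then 0 else if t ≤ 3 then 2 * t - 4
            else if t ≤ 4 then 8 - 2 * t else 0) := by
    have e : (fun x => f₁ (x - t) * g x) = fun x =>
        ((Set.indicator (Set.Icc (0:ℝ) 1) (fun _ => (1:ℝ)) (x - t)
          * Set.indicator (Set.Icc (1:ℝ) 2) (fun _ => (1:ℝ)) x)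
        + 2 * (Set.indicator (Set.Icc (0:ℝ) 1) (fun _ => (1:ℝ)) (x - t)
          * Set.indicator (Set.Icc (3:ℝ) 4) (fun _ => (1:ℝ)) x))
        - ((1/2) * (Set.indicator (Set.Icc (2:ℝ) 3) (fun _ => (1:ℝ)) (x - t)
          * Set.indicator (Set.Icc (1:ℝ) 2) (fun _ => (1:ℝ)) x)
        + (Set.indicator (Set.Icc (2:ℝ) 3) (fun _ => (1:ℝ)) (x - t)
          * Set.indicator (Set.Icc (3:ℝ) 4) (fun _ => (1:ℝ)) x)) := by
      funext x
      rw [hf₁, hg]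
      ring
    rw [e, integral_sub, integral_add, integral_add, integral_const_mul, integral_const_mul,
      aux_val, aux_val, aux_val, aux_val]
    · grind
    · exact (aux_int _ _ _ _ _).const_mul _
    · exact aux_int _ _ _ _ _
    · exact aux_int _ _ _ _ _
    · exact (aux_int _ _ _ _ _).const_mul _
    · exact (aux_int _ _ _ _ _).add ((aux_int _ _ _ _ _).const_mul _)
    · exact ((aux_int _ _ _ _ _).const_mul _).add (aux_int _ _ _ _ _)
  refine ⟨?_, h1⟩
  rw [h1]
  by_cases h2 : 2 ≤ t
  · have e : (fun x => (if 2 ≤ t then f₁' (x - (t - 2)) else 0) * g x) = fun x =>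
        (Set.indicator (Set.Icc (2:ℝ) 3) (fun _ => (1:ℝ)) (x - (t - 2))
          * Set.indicator (Set.Icc (1:ℝ) 2) (fun _ => (1:ℝ)) x)
        + 2 * (Set.indicator (Set.Icc (2:ℝ) 3) (fun _ => (1:ℝ)) (x - (t - 2))
          * Set.indicator (Set.Icc (3:ℝ) 4) (fun _ => (1:ℝ)) x) := by
      funext x
      rw [hf₁', hg, if_pos h2]
      ring
    rw [e, integral_add, integral_const_mul, aux_val, aux_val]
    · grind
    · exact aux_int _ _ _ _ _
    · exact (aux_int _ _ _ _ _).const_mul _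
  · simp [h2, (not_le.mp h2).le]
end
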